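/- arXiv:1703.10986 — 2 statements merged into one kernel-verified Lean document; each statement's English description precedes it below -/
import Mathlib

section
/- If q ∈ 𝕊 is a non-real coquaternion with dv(q) = 0, then q is similar to the dual number re(q) + i + j, i.e. there exists an invertible h ∈ 𝕊 such that h⁻¹ q h = re(q) + i + j. -/
open Quaternion Polynomial

noncomputable section

/-- The real algebra of coquaternions (split quaternions):
basis `1, i, j, k` with `i² = -1`, `j² = k² = 1`, `ij = -ji = k`. -/
abbrev CoQ : Type := ℍ[ℝ, -1, 1]

/-- The determinant of a coquaternion: `det q = q₀² + q₁² - q₂² - q₃²` (equals `q * star q`). -/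
def coDet (q : CoQ) : ℝ := q.re ^ 2 + q.imI ^ 2 - q.imJ ^ 2 - q.imK ^ 2

/-- The determinant of the vector part of a coquaternion: `dv q = q₁² - q₂² - q₃²`. -/
def coDv (q : CoQ) : ℝ := q.imI ^ 2 - q.imJ ^ 2 - q.imK ^ 2

/-!
Write `v` for the vector part of `q` and `n = i + j`, so that `v² = n² = 0`. For every `y` the
element `h = v y + y n` satisfies `h n = v y n = v h`, so it conjugates `q` to `re q + n` as soon as
its norm `h * star h` is nonzero. When `v = a i + b j + c k` this norm is `2 (a - b)` for `y = 1`
and `2 (a + b)` for `y = i`; both vanish only if `a = b = 0`, and then `c² = 0` as well.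
-/

theorem semiconjBy_mul_add_mul {S : Type*} [NonUnitalSemiring S] {x y z : S}
    (h : x * x * y = y * (z * z)) : SemiconjBy (x * y + y * z) z x := by
  calc (x * y + y * z) * z = x * y * z + y * (z * z) := by rw [add_mul, mul_assoc y]
    _ = x * (x * y + y * z) := by rw [← h, mul_add, add_comm, mul_assoc x x, mul_assoc x y]

theorem exists_units_inv_mul_mul_eq {M : Type*} [Monoid M] {h p q : M} (hh : IsUnit h)
    (hpq : SemiconjBy h p q) : ∃ u : Mˣ, ↑u⁻¹ * q * ↑u = p := by
  obtain ⟨u, rfl⟩ := hh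
  exact ⟨u, by rw [mul_assoc, ← hpq.eq, u.inv_mul_cancel_left]⟩

section QuaternionAlgebra

variable {R : Type*} [CommRing R]

theorem isUnit_of_isUnit_re_mul_star {c₁ c₂ c₃ : R} {h : ℍ[R,c₁,c₂,c₃]}
    (hh : IsUnit (h * star h).re) : IsUnit h := by
  have h_norm : IsUnit (h * star h) := by
    rw [QuaternionAlgebra.mul_star_eq_coe]
    exact hh.map (algebraMap R ℍ[R,c₁,c₂,c₃])
  exact ((Commute.isUnit_mul_iff (star_comm_self' h).symm).mp h_norm).1

variable {c₁ c₃ : R}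

theorem im_mul_im_eq_coe (q : ℍ[R,c₁,c₃]) :
    q.im * q.im = ↑(c₁ * q.imI ^ 2 + c₃ * q.imJ ^ 2 - c₁ * c₃ * q.imK ^ 2) := by
  ext <;> simp [sq] <;> ring

theorem re_mul_star (q : ℍ[R,c₁,c₃]) :
    (q * star q).re =
      q.re ^ 2 - c₁ * q.imI ^ 2 - c₃ * q.imJ ^ 2 + c₁ * c₃ * q.imK ^ 2 := by
  simp only [QuaternionAlgebra.re_mul, QuaternionAlgebra.re_star, QuaternionAlgebra.imI_star,
    QuaternionAlgebra.imJ_star, QuaternionAlgebra.imK_star]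
  ring

theorem semiconjBy_im_mul_add_mul_im {p q : ℍ[R,c₁,c₃]} (hre : p.re = q.re)
    (him : p.im * p.im = q.im * q.im) (y : ℍ[R,c₁,c₃]) :
    SemiconjBy (q.im * y + y * p.im) p q := by
  have h_im : SemiconjBy (q.im * y + y * p.im) p.im q.im := by
    apply semiconjBy_mul_add_mul
    rw [him, im_mul_im_eq_coe]
    exact QuaternionAlgebra.coe_commutes _ y
  have h_re : SemiconjBy (q.im * y + y * p.im) (p.re : ℍ[R,c₁,c₃]) (q.re : ℍ[R,c₁,c₃]) := by
    rw [hre]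
    exact (QuaternionAlgebra.coe_commute _ _).symm
  simpa only [QuaternionAlgebra.re_add_im] using h_re.add_right h_im

theorem exists_units_inv_mul_mul_eq_of_im_mul_im_eq {p q : ℍ[R,c₁,c₃]} (hre : p.re = q.re)
    (him : p.im * p.im = q.im * q.im) (y : ℍ[R,c₁,c₃])
    (hy : IsUnit ((q.im * y + y * p.im) * star (q.im * y + y * p.im)).re) :
    ∃ u : ℍ[R,c₁,c₃]ˣ, ↑u⁻¹ * q * ↑u = p :=
  exists_units_inv_mul_mul_eq (isUnit_of_isUnit_re_mul_star hy)
    (semiconjBy_im_mul_add_mul_im hre him y)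

end QuaternionAlgebra

section SplitQuaternion

variable {R : Type*} [CommRing R] {p q : ℍ[R,-1,1]}

variable (R) in
/-- The basis element `i` of the split quaternions over `R`, used to build a conjugating element. -/
def unitI : ℍ[R,-1,1] := ⟨0, 1, 0, 0⟩

theorem im_mul_im_eq_zero (hq : q.imI ^ 2 - q.imJ ^ 2 - q.imK ^ 2 = 0) : q.im * q.im = 0 := by
  rw [im_mul_im_eq_coe, ← QuaternionAlgebra.coe_zero]
  congr 1
  linear_combination -hq

theorem re_mul_star_im_add_im (hp : p.imI ^ 2 - p.imJ ^ 2 - p.imK ^ 2 = 0)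
    (hq : q.imI ^ 2 - q.imJ ^ 2 - q.imK ^ 2 = 0) :
    ((q.im + p.im) * star (q.im + p.im)).re =
      2 * (q.imI * p.imI - q.imJ * p.imJ - q.imK * p.imK) := by
  have h_coords : q.im + p.im = ⟨0, q.imI + p.imI, q.imJ + p.imJ, q.imK + p.imK⟩ := by
    ext <;> simp
  rw [h_coords, re_mul_star]
  dsimp only
  linear_combination hp + hq

theorem re_mul_star_im_mul_unitI_add (hp : p.imI ^ 2 - p.imJ ^ 2 - p.imK ^ 2 = 0)
    (hq : q.imI ^ 2 - q.imJ ^ 2 - q.imK ^ 2 = 0) :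
    ((q.im * unitI R + unitI R * p.im) * star (q.im * unitI R + unitI R * p.im)).re =
      2 * (q.imI * p.imI + q.imJ * p.imJ + q.imK * p.imK) := by
  have h_coords : q.im * unitI R + unitI R * p.im =
      ⟨-(q.imI + p.imI), 0, q.imK - p.imK, p.imJ - q.imJ⟩ := by
    ext <;> simp [unitI] <;> ring
  rw [h_coords, re_mul_star]
  dsimp only
  linear_combination hp + hq

theorem imI_sub_imJ_ne_zero_or_imI_add_imJ_ne_zero [NoZeroDivisors R] [NeZero (2 : R)]
    (hq : ¬(q.imI = 0 ∧ q.imJ = 0 ∧ q.imK = 0))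
    (hdv : q.imI ^ 2 - q.imJ ^ 2 - q.imK ^ 2 = 0) :
    q.imI - q.imJ ≠ 0 ∨ q.imI + q.imJ ≠ 0 := by
  by_contra! ⟨hsub, hadd⟩
  have hI : q.imI = 0 := by
    refine (mul_eq_zero_iff_left (two_ne_zero' R)).mp ?_
    linear_combination hsub + hadd
  have hJ : q.imJ = 0 := by linear_combination hI - hsub
  have hK : q.imK = 0 := by simpa [hI, hJ] using hdv
  exact hq ⟨hI, hJ, hK⟩

end SplitQuaternion

theorem stmt_4_general {F : Type*} [Field F] [NeZero (2 : F)] (q : ℍ[F,-1,1])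
    (hq : ¬(q.imI = 0 ∧ q.imJ = 0 ∧ q.imK = 0))
    (hdv : q.imI ^ 2 - q.imJ ^ 2 - q.imK ^ 2 = 0) :
    ∃ u : ℍ[F,-1,1]ˣ, ↑u⁻¹ * q * ↑u = ⟨q.re, 1, 1, 0⟩ := by
  set p : ℍ[F,-1,1] := ⟨q.re, 1, 1, 0⟩
  have hp : p.imI ^ 2 - p.imJ ^ 2 - p.imK ^ 2 = 0 := by simp [p]
  have him : p.im * p.im = q.im * q.im := by rw [im_mul_im_eq_zero hp, im_mul_im_eq_zero hdv]
  rcases imI_sub_imJ_ne_zero_or_imI_add_imJ_ne_zero hq hdv with hsub | hadd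
  · refine exists_units_inv_mul_mul_eq_of_im_mul_im_eq rfl him 1 ?_
    rw [mul_one, one_mul, re_mul_star_im_add_im hp hdv]
    simpa [p, two_ne_zero] using hsub
  · refine exists_units_inv_mul_mul_eq_of_im_mul_im_eq rfl him (unitI F) ?_
    rw [re_mul_star_im_mul_unitI_add hp hdv]
    simpa [p, two_ne_zero] using hadd

/-- A non-real coquaternion with `dv q = 0` is similar to the dual number
`re q + i + j`. -/
theorem stmt_4 (q : CoQ) (hq : ¬(q.imI = 0 ∧ q.imJ = 0 ∧ q.imK = 0))
    (hdv : coDv q = 0) :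
    ∃ u : CoQˣ, (↑u⁻¹ : CoQ) * q * ↑u = (⟨q.re, 1, 1, 0⟩ : CoQ) :=
  stmt_4_general q hq hdv
end
end

section
/- Let q ∈ 𝕊 with re(q) = q₀, and suppose P ∈ 𝕊[x] is written as P(x) = Q(x) Ψ_q(x) + B x + A with Q ∈ 𝕊[x] and A, B = b₀ + b₁ i + b₂ j + b₃ k ∈ 𝕊, where B ≠ 0 and det(B) = 0. Suppose γ = γ₀ + γ₁ i with γ₀, γ₁ ∈ ℝ, γ₁ ≠ 0, satisfies A + B γ = 0. Set k₁ = −(b₀b₂ + b₁b₃)/(b₀² + b₁²), k₂ = (b₁b₂ − b₀b₃)/(b₀² + b₁²) and β = (dv(q) + (q₀ − γ₀)² − γ₁²)/(2γ₁). Then z₀ = q₀ + (β + γ₁) i + (k₂β + k₁(q₀ − γ₀)) j + (−k₁β + k₂(q₀ − γ₀)) k satisfies re(z₀) = q₀, det(z₀) = det(q) and P(z₀) = 0, and z₀ is the unique zero of P quasi-similar to q. -/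
open Quaternion Polynomial

noncomputable section

/-- The characteristic polynomial of the quasi-similarity class of `q`:
`Ψ_q(x) = x² - 2 re(q) x + det(q)`, a polynomial with real coefficients. -/
def charPoly (q : CoQ) : Polynomial CoQ :=
  X ^ 2 - C ((2 * q.re : ℝ) : CoQ) * X + C ((coDet q : ℝ) : CoQ)

/-!
By Cayley–Hamilton, `Ψ_q` vanishes on the quasi-similarity class of `q`. As its coefficients are
central, so does `Q Ψ_q`, and the zeros of `P` in the class are those of `B z + A = B (z - γ)`.

Write coquaternions as `u + v j` with `u, v` complex, so that `j u = conj u j` and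
`det (u + v j) = |u|² - |v|²`. A nonzero singular `B` is `b (1 - κ j)` with `b ≠ 0` and `|κ| = 1`,
and its right annihilator is the real plane `v = κ conj u`. On the translate of this plane by `γ`
the determinant is `|u|² - |u - γ|²`, which is affine in `u`; since `im γ ≠ 0`, prescribing it
together with `re u = q₀` leaves exactly one point.
-/

section RealPolynomials

variable {R A : Type*} [CommSemiring R] [Semiring A] [Algebra R A]

theorem eval_mul_map_algebraMap (Q : A[X]) (p : R[X]) (a : A) :
    (Q * p.map (algebraMap R A)).eval a = Q.eval a * aeval a p := by
  rw [aeval_def, ← eval_map]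
  refine eval₂_mul_noncomm (RingHom.id A) a fun n => ?_
  rw [coeff_map]
  exact Algebra.commute_algebraMap_left (p.coeff n) a

end RealPolynomials

namespace CoQ

open Complex
open scoped ComplexConjugate

/-- Two coquaternions are quasi-similar when they have the same real part and the same
determinant; unlike for quaternions, this is weaker than being conjugate. -/
def QuasiSimilar (z q : CoQ) : Prop := z.re = q.re ∧ coDet z = coDet q

section CharPoly

theorem star_mul_self_eq_coDet (z : CoQ) : star z * z = (coDet z : CoQ) := by
  rw [QuaternionAlgebra.star_mul_eq_coe]
  congr 1
  simp only [coDet, QuaternionAlgebra.re_mul, QuaternionAlgebra.re_star,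
    QuaternionAlgebra.imI_star, QuaternionAlgebra.imJ_star, QuaternionAlgebra.imK_star]
  ring

theorem sq_sub_two_re_mul_add_coDet (z : CoQ) :
    z ^ 2 - ((2 * z.re : ℝ) : CoQ) * z + (coDet z : CoQ) = 0 := by
  have trace : ((2 * z.re : ℝ) : CoQ) = star z + z := by
    simpa using (QuaternionAlgebra.star_add_self' z).symm
  rw [trace, ← star_mul_self_eq_coDet]
  noncomm_ring

theorem charPoly_eq_map (q : CoQ) :
    charPoly q =
      (X ^ 2 - C (2 * q.re) * X + C (coDet q) : ℝ[X]).map (algebraMap ℝ CoQ) := by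
  simp [charPoly, QuaternionAlgebra.coe_algebraMap]

theorem eval_mul_charPoly {z q : CoQ} (hz : QuasiSimilar z q) (Q : CoQ[X]) :
    (Q * charPoly q).eval z = 0 := by
  rw [charPoly_eq_map, eval_mul_map_algebraMap, ← hz.1, ← hz.2]
  have cayley_hamilton : aeval z (X ^ 2 - C (2 * z.re) * X + C (coDet z) : ℝ[X]) = 0 := by
    simpa [QuaternionAlgebra.coe_algebraMap] using sq_sub_two_re_mul_add_coDet z
  rw [cayley_hamilton, mul_zero]

theorem eval_eq_zero_iff_mul_sub_eq_zero {P Q : CoQ[X]} {q A B c z : CoQ}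
    (hP : P = Q * charPoly q + C B * X + C A) (hc : A + B * c = 0) (hz : QuasiSimilar z q) :
    P.eval z = 0 ↔ B * (z - c) = 0 := by
  rw [hP, eval_add, eval_add, eval_mul_charPoly hz, eval_C_mul, eval_X, eval_C, zero_add,
    eq_neg_of_add_eq_zero_left hc, ← sub_eq_add_neg, ← mul_sub]

end CharPoly

section ComplexCoordinates

/-- The complex number `u` in the decomposition `z = u + v j` of a coquaternion, where `ℂ` is
identified with the span of `1` and `i`. -/
def complexPart (z : CoQ) : ℂ := ⟨z.re, z.imI⟩

/-- The complex number `v` in the decomposition `z = u + v j` of a coquaternion, where `ℂ` is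
identified with the span of `1` and `i`. -/
def splitPart (z : CoQ) : ℂ := ⟨z.imJ, z.imK⟩

/-- The embedding of `ℂ` into the coquaternions as the span of `1` and `i`. -/
def ofComplex (u : ℂ) : CoQ := ⟨u.re, u.im, 0, 0⟩

theorem ext_parts {z w : CoQ} (hc : z.complexPart = w.complexPart)
    (hs : z.splitPart = w.splitPart) : z = w :=
  QuaternionAlgebra.ext (congrArg re hc) (congrArg im hc) (congrArg re hs) (congrArg im hs)

theorem complexPart_mul (z w : CoQ) :
    (z * w).complexPart =
      z.complexPart * w.complexPart + z.splitPart * conj w.splitPart := by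
  apply Complex.ext
  · simp only [complexPart, splitPart, QuaternionAlgebra.re_mul, add_re, mul_re, conj_re, conj_im]
    ring
  · simp only [complexPart, splitPart, QuaternionAlgebra.imI_mul, add_im, mul_im, conj_re, conj_im]
    ring

theorem splitPart_mul (z w : CoQ) :
    (z * w).splitPart =
      z.complexPart * w.splitPart + z.splitPart * conj w.complexPart := by
  apply Complex.ext
  · simp only [complexPart, splitPart, QuaternionAlgebra.imJ_mul, add_re, mul_re, conj_re, conj_im]
    ring
  · simp only [complexPart, splitPart, QuaternionAlgebra.imK_mul, add_im, mul_im, conj_re, conj_im]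
    ring

theorem complexPart_sub_ofComplex (z : CoQ) (u : ℂ) :
    (z - ofComplex u).complexPart = z.complexPart - u := rfl

theorem splitPart_sub_ofComplex (z : CoQ) (u : ℂ) :
    (z - ofComplex u).splitPart = z.splitPart := by
  simp [splitPart, ofComplex]

theorem coDet_eq_normSq_sub_normSq (z : CoQ) :
    coDet z = normSq z.complexPart - normSq z.splitPart := by
  simp only [coDet, complexPart, splitPart, normSq_mk]
  ring

end ComplexCoordinates

section Annihilator

/-- The complex number `κ` with `B = u (1 - κ j)`, where `B = u + v j` and `u ≠ 0`. It determines
the right annihilator of `B` when `B` is singular. -/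
def slope (B : CoQ) : ℂ := -B.splitPart / B.complexPart

theorem re_slope (B : CoQ) :
    (slope B).re = -((B.re * B.imJ + B.imI * B.imK) / (B.re ^ 2 + B.imI ^ 2)) := by
  simp only [slope, complexPart, splitPart, div_re, neg_re, neg_im, normSq_mk]
  ring

theorem im_slope (B : CoQ) :
    (slope B).im = (B.imI * B.imJ - B.re * B.imK) / (B.re ^ 2 + B.imI ^ 2) := by
  simp only [slope, complexPart, splitPart, div_im, neg_re, neg_im, normSq_mk]
  ring

theorem complexPart_ne_zero {B : CoQ} (hB : B ≠ 0) (hdet : 0 ≤ coDet B) :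
    B.complexPart ≠ 0 := by
  intro hc
  rw [coDet_eq_normSq_sub_normSq, hc, map_zero, zero_sub, neg_nonneg] at hdet
  have hs : B.splitPart = 0 := normSq_eq_zero.mp (hdet.antisymm (normSq_nonneg _))
  exact hB (ext_parts hc hs)

theorem normSq_slope {B : CoQ} (hB : B ≠ 0) (hdet : coDet B = 0) : normSq (slope B) = 1 := by
  have hc : normSq B.complexPart ≠ 0 := normSq_eq_zero.not.mpr (complexPart_ne_zero hB hdet.ge)
  rw [coDet_eq_normSq_sub_normSq, sub_eq_zero] at hdet
  rw [slope, map_div₀, normSq_neg, ← hdet, div_self hc]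

theorem mul_eq_zero_iff_splitPart_eq {B w : CoQ} (hB : B ≠ 0) (hdet : coDet B = 0) :
    B * w = 0 ↔ w.splitPart = slope B * conj w.complexPart := by
  have hc : B.complexPart ≠ 0 := complexPart_ne_zero hB hdet.ge
  have hv : B.splitPart = -(B.complexPart * slope B) := by
    rw [slope, mul_div_cancel₀ _ hc, neg_neg]
  have hsplit : (B * w).splitPart =
      B.complexPart * (w.splitPart - slope B * conj w.complexPart) := by
    rw [splitPart_mul, hv]
    ring
  constructor
  · intro h
    rw [h] at hsplit
    exact sub_eq_zero.mp ((mul_eq_zero.mp hsplit.symm).resolve_left hc)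
  · intro hw
    have hunit : slope B * conj (slope B) = 1 := by
      rw [mul_conj, normSq_slope hB hdet, ofReal_one]
    refine ext_parts ?_ ?_
    · calc (B * w).complexPart
          = B.complexPart * w.complexPart * (1 - slope B * conj (slope B)) := by
            rw [complexPart_mul, hv, hw, map_mul, conj_conj]
            ring
        _ = 0 := by rw [hunit, sub_self, mul_zero]
    · rw [hsplit, hw, sub_self, mul_zero]
      rfl

theorem mul_sub_ofComplex_eq_zero_iff {B z : CoQ} {γ : ℂ} (hB : B ≠ 0) (hdet : coDet B = 0) :
    B * (z - ofComplex γ) = 0 ↔ z.splitPart = slope B * conj (z.complexPart - γ) := by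
  rw [mul_eq_zero_iff_splitPart_eq hB hdet, splitPart_sub_ofComplex, complexPart_sub_ofComplex]

end Annihilator

section Intersection

variable {κ γ : ℂ} {z : CoQ}

theorem coDet_of_splitPart_eq (hκ : normSq κ = 1)
    (hz : z.splitPart = κ * conj (z.complexPart - γ)) :
    coDet z = 2 * (z.re * γ.re + z.imI * γ.im) - normSq γ := by
  rw [coDet_eq_normSq_sub_normSq, hz, map_mul, hκ, one_mul, normSq_conj, normSq_sub]
  simp only [complexPart, mul_re, conj_re, conj_im]
  ring

theorem coDet_eq_iff_of_splitPart_eq {q : CoQ} {β : ℝ} (hκ : normSq κ = 1) (hγ : γ.im ≠ 0)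
    (hβ : β = (coDv q + (q.re - γ.re) ^ 2 - γ.im ^ 2) / (2 * γ.im)) (hre : z.re = q.re)
    (hz : z.splitPart = κ * conj (z.complexPart - γ)) :
    coDet z = coDet q ↔ z.imI = β + γ.im := by
  have hdiff : coDet z - coDet q = 2 * γ.im * (z.imI - (β + γ.im)) := by
    have hβ' : 2 * γ.im * β = coDv q + (q.re - γ.re) ^ 2 - γ.im ^ 2 := by
      rw [hβ]
      field_simp
    have hq : coDet q = q.re ^ 2 + coDv q := by
      simp only [coDet, coDv]
      ring
    rw [coDet_of_splitPart_eq hκ hz, hq, hre, normSq_apply]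
    linear_combination hβ'
  rw [← sub_eq_zero, hdiff, mul_eq_zero, or_iff_right (mul_ne_zero two_ne_zero hγ), sub_eq_zero]

theorem splitPart_eq_mul_conj_sub_iff :
    z.splitPart = κ * conj (z.complexPart - γ) ↔
      z.imJ = κ.im * (z.imI - γ.im) + κ.re * (z.re - γ.re) ∧
        z.imK = -κ.re * (z.imI - γ.im) + κ.im * (z.re - γ.re) := by
  have hre : (κ * conj (z.complexPart - γ)).re =
      κ.im * (z.imI - γ.im) + κ.re * (z.re - γ.re) := by
    simp only [complexPart, mul_re, conj_re, conj_im, sub_re, sub_im]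
    ring
  have him : (κ * conj (z.complexPart - γ)).im =
      -κ.re * (z.imI - γ.im) + κ.im * (z.re - γ.re) := by
    simp only [complexPart, mul_im, conj_re, conj_im, sub_re, sub_im]
    ring
  rw [Complex.ext_iff, hre, him]
  rfl

theorem quasiSimilar_and_splitPart_eq_iff {q : CoQ} {β : ℝ} (hκ : normSq κ = 1) (hγ : γ.im ≠ 0)
    (hβ : β = (coDv q + (q.re - γ.re) ^ 2 - γ.im ^ 2) / (2 * γ.im)) :
    QuasiSimilar z q ∧ z.splitPart = κ * conj (z.complexPart - γ) ↔
      z = ⟨q.re, β + γ.im, κ.im * β + κ.re * (q.re - γ.re),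
        -κ.re * β + κ.im * (q.re - γ.re)⟩ := by
  constructor
  · rintro ⟨⟨hre, hdet⟩, hz⟩
    have him : z.imI = β + γ.im := (coDet_eq_iff_of_splitPart_eq hκ hγ hβ hre hz).mp hdet
    obtain ⟨hJ, hK⟩ := splitPart_eq_mul_conj_sub_iff.mp hz
    rw [him, hre, add_sub_cancel_right] at hJ hK
    exact QuaternionAlgebra.ext hre him hJ hK
  · intro h
    have hre : z.re = q.re := by rw [h]
    have him : z.imI = β + γ.im := by rw [h]
    have hz : z.splitPart = κ * conj (z.complexPart - γ) := by
      rw [splitPart_eq_mul_conj_sub_iff, him, hre, add_sub_cancel_right]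
      constructor <;> rw [h]
    exact ⟨⟨hre, (coDet_eq_iff_of_splitPart_eq hκ hγ hβ hre hz).mpr him⟩, hz⟩

end Intersection

end CoQ

/-- Case 3(c) (isolated zero): if `P = Q Ψ_q + B x + A` with `B ≠ 0` singular and
`A + B γ = 0` for `γ = γ₀ + γ₁ i` with `γ₁ ≠ 0`, then `z₀` below is the unique
zero of `P` quasi-similar to `q`. -/
theorem stmt_18 (P Q : Polynomial CoQ) (q A B : CoQ)
    (hP : P = Q * charPoly q + C B * X + C A)
    (hB0 : B ≠ 0) (hBdet : coDet B = 0)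
    (γ₀ γ₁ : ℝ) (hγ₁ : γ₁ ≠ 0)
    (hγ : A + B * (⟨γ₀, γ₁, 0, 0⟩ : CoQ) = 0)
    (k₁ k₂ β : ℝ)
    (hk₁ : k₁ = -((B.re * B.imJ + B.imI * B.imK) / (B.re ^ 2 + B.imI ^ 2)))
    (hk₂ : k₂ = (B.imI * B.imJ - B.re * B.imK) / (B.re ^ 2 + B.imI ^ 2))
    (hβ : β = (coDv q + (q.re - γ₀) ^ 2 - γ₁ ^ 2) / (2 * γ₁)) :
    let z₀ : CoQ := ⟨q.re, β + γ₁, k₂ * β + k₁ * (q.re - γ₀), -k₁ * β + k₂ * (q.re - γ₀)⟩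
    z₀.re = q.re ∧ coDet z₀ = coDet q ∧ P.eval z₀ = 0 ∧
      ∀ z : CoQ, z.re = q.re → coDet z = coDet q → P.eval z = 0 → z = z₀ := by
  obtain rfl : k₁ = (CoQ.slope B).re := hk₁.trans (CoQ.re_slope B).symm
  obtain rfl : k₂ = (CoQ.slope B).im := hk₂.trans (CoQ.im_slope B).symm
  intro z₀
  have root : A + B * CoQ.ofComplex ⟨γ₀, γ₁⟩ = 0 := hγ
  have key (z : CoQ) : CoQ.QuasiSimilar z q ∧ P.eval z = 0 ↔ z = z₀ := by
    rw [and_congr_right (CoQ.eval_eq_zero_iff_mul_sub_eq_zero hP root),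
      CoQ.mul_sub_ofComplex_eq_zero_iff hB0 hBdet]
    exact CoQ.quasiSimilar_and_splitPart_eq_iff (γ := ⟨γ₀, γ₁⟩)
      (CoQ.normSq_slope hB0 hBdet) hγ₁ hβ
  obtain ⟨⟨hre, hdet⟩, hzero⟩ := (key z₀).mpr rfl
  exact ⟨hre, hdet, hzero, fun z hzre hzdet hz => (key z).mp ⟨⟨hzre, hzdet⟩, hz⟩⟩
end
end
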